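/- arXiv:1606.02767 — 2 statements merged into one kernel-verified Lean document; each statement's English description precedes it below -/
import Mathlib

section
/- Let Γ be an alphabet with a distinguished blank symbol (blank = default), and let T be a (two-way infinite, cofinitely blank) Turing-machine tape over Γ, represented as Turing.Tape Γ with a head symbol, a left half-tape and a right half-tape. If for symbols w₁, w₂ : Γ and movement directions d₁, d₂ ∈ {left, right} ∪ {stay} (stay meaning no move is applied) the two configurations obtained from T by writing wᵢ at the head and then moving in direction dᵢ are equal as tapes, then either (w₁ = w₂ and d₁ = d₂), or the trivial blank case holds: w₁ = default, w₂ = default, the left half-tape of T is entirely blank, and the right half-tape of T is entirely blank. -/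
/-!
Read a tape as a function `ℤ → Γ` centred at its head, so that a move is a translation by
`-1`, `0` or `1`. If two rules with different moves give the same configuration, the two written
tapes are translates of each other by some `k ≠ 0`; as they agree away from the origin, the first
one satisfies `f (i + k) = f i` for all `i` but one. Since `k` has infinite order, from every cell
one can step by `k` forever, forwards or backwards, without using the one equation that may fail.
The cells visited are infinitely many, so one of them is blank, and all carry the same symbol.
-/

/-- Apply an optional move direction to a tape: `none` means "stay" (no move). -/
def moveOpt {Γ : Type*} [Inhabited Γ] (d : Option Turing.Dir) (T : Turing.Tape Γ) :
    Turing.Tape Γ :=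
  match d with
  | none => T
  | some d => Turing.Tape.move d T

section Translation

open Filter

theorem eq_of_add_eq_of_forall_add_nsmul_ne {M α : Type*} [AddLeftCancelMonoid M] {f : M → α}
    {b : α} {k p x : M} (hk : ¬IsOfFinAddOrder k) (hb : ∀ᶠ y in cofinite, f y = b)
    (hf : ∀ y ≠ p, f (y + k) = f y) (hx : ∀ n : ℕ, x + n • k ≠ p) : f x = b := by
  have const_on_orbit (n : ℕ) : f (x + n • k) = f x := by
    induction n with
    | zero => rw [zero_nsmul, add_zero]
    | succ n ih => rw [succ_nsmul, ← add_assoc, hf _ (hx n), ih]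
  have orbit_injective : Function.Injective fun n : ℕ ↦ x + n • k :=
    (add_right_injective x).comp (injective_nsmul_iff_not_isOfFinAddOrder.2 hk)
  obtain ⟨n, hn⟩ := (orbit_injective.tendsto_cofinite.eventually hb).exists
  exact (const_on_orbit n).symm.trans hn

theorem eq_of_add_eq_of_ne {G α : Type*} [AddGroup G] {f : G → α} {b : α} {k p : G}
    (hk : ¬IsOfFinAddOrder k) (hb : ∀ᶠ y in cofinite, f y = b)
    (hf : ∀ y ≠ p, f (y + k) = f y) (x : G) : f x = b := by
  by_cases forward : ∀ n : ℕ, x + n • k ≠ p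
  · exact eq_of_add_eq_of_forall_add_nsmul_ne hk hb hf forward
  obtain ⟨m, rfl⟩ : ∃ m : ℕ, x + m • k = p := by simpa using forward
  have backward_invariant (y : G) (hy : y ≠ x + m • k + k) : f (y + -k) = f y := by
    simpa using (hf (y + -k) fun h ↦ hy (by rw [← h, neg_add_cancel_right])).symm
  refine eq_of_add_eq_of_forall_add_nsmul_ne (mt IsOfFinAddOrder.of_neg hk) hb
    backward_invariant fun n hn ↦ hk ?_
  have vanishing_multiple : (m + 1 + n) • k = 0 := by
    rw [add_assoc, ← succ_nsmul, add_right_inj, neg_nsmul] at hn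
    rw [add_nsmul, ← hn, neg_add_cancel]
  exact isOfFinAddOrder_iff_nsmul_eq_zero.2 ⟨m + 1 + n, by lia, vanishing_multiple⟩

end Translation

section Tape

open Turing Filter

variable {Γ : Type*} [Inhabited Γ]

theorem listBlank_nth_default (n : ℕ) : (default : ListBlank Γ).nth n = default :=
  (ListBlank.nth_mk [] n).trans (List.getI_nil n)

theorem listBlank_eq_default {L : ListBlank Γ} (h : ∀ n, L.nth n = default) : L = default :=
  ListBlank.ext fun n ↦ (h n).trans (listBlank_nth_default n).symm

theorem listBlank_eventually_nth_eq_default (L : ListBlank Γ) :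
    ∀ᶠ n in cofinite, L.nth n = default := by
  induction L using ListBlank.induction_on with | _ l
  rw [Nat.cofinite_eq_atTop]
  filter_upwards [eventually_ge_atTop l.length] with n hn
  rw [ListBlank.nth_mk, List.getI_eq_default l hn]

theorem tape_eventually_nth_eq_default (T : Tape Γ) : ∀ᶠ i in cofinite, T.nth i = default := by
  have right_finite := (listBlank_eventually_nth_eq_default T.right₀).image ((↑) : ℕ → ℤ)
  have left_finite := (listBlank_eventually_nth_eq_default T.left).image Int.negSucc
  refine (right_finite.union left_finite).subset fun i hi ↦ ?_
  cases i with
  | ofNat n => exact .inl ⟨n, by simpa [T.right₀_nth] using hi, rfl⟩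
  | negSucc n => exact .inr ⟨n, hi, rfl⟩

/-- The displacement of the head, in the coordinates of `Turing.Tape.nth`, caused by an optional
move: cells to the right of the head have positive index, and `none` does not move the head. -/
def moveOffset : Option Dir → ℤ
  | none => 0
  | some .left => -1
  | some .right => 1

theorem moveOffset_injective : Function.Injective moveOffset := by
  rintro (_ | _ | _) (_ | _ | _) <;> simp [moveOffset]

theorem moveOpt_nth (d : Option Dir) (T : Tape Γ) (i : ℤ) :
    (moveOpt d T).nth i = T.nth (i + moveOffset d) := by
  rcases d with _ | _ | _ <;> simp [moveOpt, moveOffset, sub_eq_add_neg]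

theorem eq_default_of_write_nth_add_eq {T : Tape Γ} {w₁ w₂ : Γ} {k : ℤ} (hk : k ≠ 0)
    (h : ∀ i, (T.write w₁).nth (i + k) = (T.write w₂).nth i) :
    w₁ = default ∧ w₂ = default ∧ T.left = default ∧ T.right = default := by
  have invariant (i : ℤ) (hi : i ≠ 0) : (T.write w₁).nth (i + k) = (T.write w₁).nth i := by
    rw [h, Tape.write_nth, Tape.write_nth, if_neg hi, if_neg hi]
  have blank : ∀ i, (T.write w₁).nth i = default :=
    eq_of_add_eq_of_ne (not_isOfFinAddOrder_of_isAddTorsionFree hk)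
      (tape_eventually_nth_eq_default _) invariant
  exact ⟨blank 0, (h 0).symm.trans (blank _),
    listBlank_eq_default fun n ↦ blank (.negSucc n),
    listBlank_eq_default fun n ↦ blank (n + 1 : ℕ)⟩

end Tape

/-- Lemma 1 of the paper, at the level of tapes: apart from the trivial all-blank case,
the transition rule (written symbol and move direction) applied between two consecutive
configurations is uniquely determined by the configurations. -/
theorem rule_unique_of_tape_eq {Γ : Type*} [Inhabited Γ] (T : Turing.Tape Γ)
    (w₁ w₂ : Γ) (d₁ d₂ : Option Turing.Dir)
    (h : moveOpt d₁ (T.write w₁) = moveOpt d₂ (T.write w₂)) :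
    (w₁ = w₂ ∧ d₁ = d₂) ∨
      (w₁ = default ∧ w₂ = default ∧ T.left = default ∧ T.right = default) := by
  have translate (i : ℤ) :
      (T.write w₁).nth (i + (moveOffset d₁ - moveOffset d₂)) = (T.write w₂).nth i := by
    have := congrArg (Turing.Tape.nth · (i - moveOffset d₂)) h
    simpa [moveOpt_nth, sub_add_eq_add_sub, add_sub_assoc] using this
  obtain rfl | hd := eq_or_ne d₁ d₂
  · exact .inl ⟨by simpa [Turing.Tape.write] using translate 0, rfl⟩
  · exact .inr (eq_default_of_write_nth_add_eq
      (sub_ne_zero.2 (moveOffset_injective.ne hd)) translate)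
end

section
/- Let Γ be an alphabet with a distinguished blank symbol (blank = default) and T : Turing.Tape Γ. For symbols w₁, w₂ : Γ, the tape obtained by writing w₁ and moving left equals the tape obtained by writing w₂ with no move, i.e. Tape.move Turing.Dir.left (T.write w₁) = T.write w₂, if and only if w₁ = default, w₂ = default, the left half-tape of T is entirely blank (T.left = default), and the right half-tape of T is entirely blank (T.right = default). -/
/-! A left move after a write can only reproduce a tape with the same half-tapes if shifting each
half-tape by one cell does not change it. Since a half-tape is blank beyond some cell, such a shift
invariance forces it to be blank everywhere. -/

section ListBlank

open Turing

variable {Γ : Type*} [Inhabited Γ]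

@[simp]
theorem listBlank_head_default : (default : ListBlank Γ).head = default :=
  rfl

@[simp]
theorem listBlank_tail_default : (default : ListBlank Γ).tail = default :=
  rfl

theorem listBlank_exists_iterate_tail_eq_default (L : ListBlank Γ) :
    ∃ n, ListBlank.tail^[n] L = default := by
  induction L using ListBlank.induction_on with
  | _ l =>
    induction l with
    | nil => exact ⟨0, rfl⟩
    | cons a l ih =>
      obtain ⟨n, hn⟩ := ih
      exact ⟨n + 1, hn⟩

theorem listBlank_tail_eq_self_iff {L : ListBlank Γ} : L.tail = L ↔ L = default := by
  constructor
  · intro hL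
    obtain ⟨n, hn⟩ := listBlank_exists_iterate_tail_eq_default L
    exact (Function.iterate_fixed hL n).symm.trans hn
  · rintro rfl
    exact listBlank_tail_default

theorem listBlank_cons_eq_iff {a : Γ} {L M : ListBlank Γ} :
    L.cons a = M ↔ a = M.head ∧ L = M.tail := by
  constructor
  · rintro rfl
    simp
  · rintro ⟨rfl, rfl⟩
    exact M.cons_head_tail

theorem listBlank_cons_eq_self_iff {a : Γ} {L : ListBlank Γ} :
    L.cons a = L ↔ a = default ∧ L = default := by
  rw [listBlank_cons_eq_iff, eq_comm (a := L), listBlank_tail_eq_self_iff]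
  exact and_congr_left fun hL ↦ by rw [hL, listBlank_head_default]

end ListBlank

theorem tape_move_left_eq_iff {Γ : Type*} [Inhabited Γ] {S T : Turing.Tape Γ} :
    S.move Turing.Dir.left = T ↔
      S.left.head = T.head ∧ S.left.tail = T.left ∧ S.right.cons S.head = T.right := by
  cases S
  cases T
  simp only [Turing.Tape.move, Turing.Tape.mk.injEq]

/-- The "stay versus left-move" case in the proof of the paper's Lemma 1:
writing `w₁` and moving left gives the same tape as writing `w₂` without moving
iff both written symbols are blank and both half-tapes of `T` are entirely blank. -/
theorem write_move_left_eq_write_iff {Γ : Type*} [Inhabited Γ] (T : Turing.Tape Γ)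
    (w₁ w₂ : Γ) :
    Turing.Tape.move Turing.Dir.left (T.write w₁) = T.write w₂ ↔
      w₁ = default ∧ w₂ = default ∧ T.left = default ∧ T.right = default := by
  calc
    Turing.Tape.move Turing.Dir.left (T.write w₁) = T.write w₂
      ↔ T.left.head = w₂ ∧ T.left.tail = T.left ∧ T.right.cons w₁ = T.right :=
        tape_move_left_eq_iff
    _ ↔ T.left.head = w₂ ∧ T.left = default ∧ w₁ = default ∧ T.right = default := by
        rw [listBlank_tail_eq_self_iff, listBlank_cons_eq_self_iff]
    _ ↔ w₁ = default ∧ w₂ = default ∧ T.left = default ∧ T.right = default := by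
        constructor
        · rintro ⟨hw₂, hL, hw₁, hR⟩
          rw [hL, listBlank_head_default] at hw₂
          exact ⟨hw₁, hw₂.symm, hL, hR⟩
        · rintro ⟨hw₁, hw₂, hL, hR⟩
          exact ⟨by rw [hL, hw₂, listBlank_head_default], hL, hw₁, hR⟩
end
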